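/- Let X be a regular (T3) topological space. If there is a neighbourhood assignment f on X such that D_G^f is a discrete subspace of X for every open G ⊆ X, then X has an irreducible base. -/

import Mathlib

open TopologicalSpace Cardinal Set

universe u

section Defs

variable {X : Type u} [TopologicalSpace X]

/-- `B` is a neighbourhood base of `x`: members are open sets containing `x`,
and every open set containing `x` contains a member of `B`. -/
def NbhdBasisAt (B : Set (Set X)) (x : X) : Prop :=
  (∀ U ∈ B, IsOpen U ∧ x ∈ U) ∧ ∀ V : Set X, IsOpen V → x ∈ V → ∃ U ∈ B, U ⊆ V

/-- The family `F` contains a neighbourhood base of `x`. -/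
def ContainsNbhdBasisAt (F : Set (Set X)) (x : X) : Prop :=
  ∀ V : Set X, IsOpen V → x ∈ V → ∃ U ∈ F, x ∈ U ∧ U ⊆ V

/-- Property (*) of a decomposition. -/
def StarProperty (𝒲 : X → Set (Set X)) : Prop :=
  ∀ x y : X, x ≠ y → ∀ U ∈ 𝒲 x, ∀ V ∈ 𝒲 y, x ∈ V → y ∈ U → (V \ U).Nonempty

/-- `𝒰` is an irreducible decomposition of a base of `X`. -/
def IsIrreducibleDecomp (𝒰 : X → Set (Set X)) : Prop :=
  IsTopologicalBasis (⋃ x, 𝒰 x) ∧ (∀ x, NbhdBasisAt (𝒰 x) x) ∧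
    ∀ x : X, ¬ ContainsNbhdBasisAt (⋃ y ∈ {y : X | y ≠ x}, 𝒰 y) x

def HasIrreducibleBase (X : Type u) [TopologicalSpace X] : Prop :=
  ∃ 𝒰 : X → Set (Set X), IsIrreducibleDecomp 𝒰

/-- `f` is a neighbourhood assignment on `Y`. -/
def IsNbhdAssignment (Y : Set X) (f : X → Set X) : Prop :=
  ∀ y ∈ Y, IsOpen (f y) ∧ y ∈ f y

/-- `D_N^f = { y ∈ Y : y ∈ N ⊆ f y }`. -/
def Dset (Y : Set X) (f : X → Set X) (N : Set X) : Set X :=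
  {y | y ∈ Y ∧ y ∈ N ∧ N ⊆ f y}

/-- `Y` is weakly separated (as a subspace of `X`). -/
def WeaklySeparatedSub (Y : Set X) : Prop :=
  ∃ f : X → Set X, IsNbhdAssignment Y f ∧
    ∀ y ∈ Y, ∀ z ∈ Y, y ≠ z → y ∉ f z ∨ z ∉ f y

/-- `Z` is pseudo weakly separated: it contains a weakly separated subspace of the
same cardinality. -/
def PseudoWeaklySeparated (Z : Set X) : Prop :=
  ∃ W ⊆ Z, #W = #Z ∧ WeaklySeparatedSub W

/-- The weight of a space: least cardinality of a base. -/
noncomputable def weight (X : Type u) [TopologicalSpace X] : Cardinal.{u} :=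
  sInf {c | ∃ B : Set (Set X), IsTopologicalBasis B ∧ c = #B}

/-- The character of `X` at `x`: least cardinality of a neighbourhood base at `x`. -/
noncomputable def charAt (x : X) : Cardinal.{u} :=
  sInf {c | ∃ B : Set (Set X), NbhdBasisAt B x ∧ c = #B}

/-- The character of `X`. -/
noncomputable def character (X : Type u) [TopologicalSpace X] : Cardinal.{u} :=
  ⨆ x : X, charAt x

/-- `N` is a network of `X`. -/
def IsNetwork (N : Set (Set X)) : Prop :=
  ∀ x : X, ∀ U : Set X, IsOpen U → x ∈ U → ∃ M ∈ N, x ∈ M ∧ M ⊆ U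

/-- The net weight of `X`: least cardinality of a network. -/
noncomputable def netWeight (X : Type u) [TopologicalSpace X] : Cardinal.{u} :=
  sInf {c | ∃ N : Set (Set X), IsNetwork N ∧ c = #N}

/-- Tkačenko's cardinal function `R`. -/
noncomputable def Rinv (X : Type u) [TopologicalSpace X] : Cardinal.{u} :=
  sSup {c | ∃ Y : Set X, WeaklySeparatedSub Y ∧ c = #Y}

/-- `S` is right-separated: it carries a well-ordering in which every point has an
open neighbourhood avoiding all later points of `S`. -/
def RightSeparated (S : Set X) : Prop :=
  ∃ r : S → S → Prop, IsWellOrder S r ∧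
    ∀ x : S, ∃ U : Set X, IsOpen U ∧ (x : X) ∈ U ∧ ∀ y : S, r x y → (y : X) ∉ U

end Defs

/-!
Replace `f x` by a regular open neighbourhood `g x ⊆ f x` of `x`, with `g x = {x}` if `x` is
isolated. Given an open `V ∋ y`, put `W = V ∩ g y` and `E = D_W^g \ {y}`. The set `D_W^g` is
discrete and contains `y`, so `y ∉ closure E`; and `E` is a discrete set of non-isolated points,
hence nowhere dense. A point `x ≠ y` of `W \ closure E` with `W \ closure E ⊆ g x` would satisfy
`W ⊆ g x`, because a regular open set absorbs nowhere dense gaps, and would then belong to `E`.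
So the open sets `U ∋ y` with `D_U^g ⊆ {y}` form a neighbourhood base of `y`, and `g x` contains
no member around `x` of the base chosen at another point.

In a semiregular space these steps go through because indistinguishable points would both lie in
`D_(f x ∩ f y)^f`, so the space is T0, and in a semiregular T0 space an open `O ∋ d` contained in
`closure {d}` is `{d}`; this is why discrete sets of non-isolated points are nowhere dense.
-/

section RegularOpen

variable {X : Type*} [TopologicalSpace X]

/-- Regular open sets: those equal to the interior of their closure. Such a set contains every open
set in which it is dense. -/
def IsRegularOpen (U : Set X) : Prop :=
  interior (closure U) = U

/-- Semiregular spaces: the regular open sets form a base. No separation axiom is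
included, so that every regular space is semiregular. -/
class SemiregularSpace (X : Type*) [TopologicalSpace X] : Prop where
  isTopologicalBasis_isRegularOpen : IsTopologicalBasis {U : Set X | IsRegularOpen U}

theorem IsRegularOpen.isOpen {U : Set X} (hU : IsRegularOpen U) : IsOpen U :=
  hU ▸ isOpen_interior

theorem IsRegularOpen.subset_of_subset_closure {U W : Set X} (hU : IsRegularOpen U)
    (hW : IsOpen W) (hWU : W ⊆ closure U) : W ⊆ U :=
  (interior_maximal hWU hW).trans_eq hU

theorem IsRegularOpen.subset_of_diff_closure_subset {U W E : Set X} (hU : IsRegularOpen U)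
    (hW : IsOpen W) (hE : IsNowhereDense E) (h : W \ closure E ⊆ U) : W ⊆ U := by
  have hdense : Dense (closure E)ᶜ := interior_eq_empty_iff_dense_compl.1 hE
  exact hU.subset_of_subset_closure hW <|
    (hdense.open_subset_closure_inter hW).trans (closure_mono h)

theorem isRegularOpen_interior_of_isClosed {C : Set X} (hC : IsClosed C) :
    IsRegularOpen (interior C) :=
  (interior_mono (closure_minimal interior_subset hC)).antisymm
    (interior_maximal subset_closure isOpen_interior)

theorem exists_isRegularOpen_mem_subset [SemiregularSpace X] {x : X} {V : Set X}
    (hV : IsOpen V) (hx : x ∈ V) : ∃ U, IsRegularOpen U ∧ x ∈ U ∧ U ⊆ V :=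
  SemiregularSpace.isTopologicalBasis_isRegularOpen.exists_subset_of_mem_open hx hV

theorem exists_isRegularOpen_mem_subset_eq_singleton [SemiregularSpace X] {x : X} {V : Set X}
    (hV : IsOpen V) (hx : x ∈ V) :
    ∃ U, IsRegularOpen U ∧ x ∈ U ∧ U ⊆ V ∧ (IsOpen {x} → U = {x}) := by
  by_cases hiso : IsOpen {x}
  · obtain ⟨U, hU, hxU, hUx⟩ := exists_isRegularOpen_mem_subset hiso rfl
    exact ⟨U, hU, hxU, hUx.trans (singleton_subset_iff.2 hx), fun _ =>
      hUx.antisymm (singleton_subset_iff.2 hxU)⟩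
  · obtain ⟨U, hU, hxU, hUV⟩ := exists_isRegularOpen_mem_subset hV hx
    exact ⟨U, hU, hxU, hUV, fun h => absurd h hiso⟩

instance [RegularSpace X] : SemiregularSpace X where
  isTopologicalBasis_isRegularOpen := by
    refine isTopologicalBasis_of_isOpen_of_nhds (fun U hU => IsRegularOpen.isOpen hU) ?_
    intro x V hx hV
    obtain ⟨C, hCx, hC, hCV⟩ := exists_mem_nhds_isClosed_subset (hV.mem_nhds hx)
    exact ⟨interior C, isRegularOpen_interior_of_isClosed hC, mem_interior_iff_mem_nhds.2 hCx,
      interior_subset.trans hCV⟩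

theorem isOpen_singleton_of_subset_closure [T0Space X] [SemiregularSpace X] {x : X} {O : Set X}
    (hO : IsOpen O) (hx : x ∈ O) (hOx : O ⊆ closure {x}) : IsOpen {x} := by
  suffices O = {x} from this ▸ hO
  refine eq_singleton_iff_unique_mem.2 ⟨hx, fun z hz => ?_⟩
  have hxz : x ⤳ z := specializes_iff_mem_closure.2 (hOx hz)
  have hzx : z ⤳ x := by
    refine specializes_iff_forall_open.2 fun V hV hxV => ?_
    obtain ⟨U, hU, hxU, hUV⟩ := exists_isRegularOpen_mem_subset hV hxV
    have hOU : O ⊆ U := hU.subset_of_subset_closure hO <|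
      hOx.trans (closure_mono (singleton_subset_iff.2 hxU))
    exact hUV (hOU hz)
  exact (hzx.antisymm hxz).eq

end RegularOpen

section Discrete

variable {X : Type*} [TopologicalSpace X] {D : Set X}

theorem isDiscrete_of_forall_exists_inter_subset
    (h : ∀ x ∈ D, ∃ U : Set X, IsOpen U ∧ x ∈ U ∧ U ∩ D ⊆ {x}) : IsDiscrete D := by
  refine isDiscrete_iff_forall_mem_exists_isOpen.2 fun x hx => ?_
  obtain ⟨U, hU, hxU, hUD⟩ := h x hx
  exact ⟨U, hU, hUD.antisymm (singleton_subset_iff.2 ⟨hxU, hx⟩)⟩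

theorem notMem_closure_diff_singleton_of_isDiscrete (hD : IsDiscrete D) {x : X} (hx : x ∈ D) :
    x ∉ closure (D \ {x}) := by
  obtain ⟨U, hU, hUD⟩ := isDiscrete_iff_forall_mem_exists_isOpen.1 hD x hx
  have hxU : x ∈ U := (hUD.ge rfl).1
  intro hcl
  obtain ⟨z, hzU, hzD, hzx⟩ := mem_closure_iff.1 hcl U hU hxU
  exact hzx (hUD.le ⟨hzU, hzD⟩)

theorem isNowhereDense_of_isDiscrete [T0Space X] [SemiregularSpace X] (hD : IsDiscrete D)
    (hiso : ∀ x ∈ D, ¬ IsOpen {x}) : IsNowhereDense D := by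
  refine not_nonempty_iff_eq_empty.1 fun ⟨p, hp⟩ => ?_
  obtain ⟨d, hd, hdD⟩ := mem_closure_iff.1 (interior_subset hp) _ isOpen_interior hp
  obtain ⟨U, hU, hUD⟩ := isDiscrete_iff_forall_mem_exists_isOpen.1 hD d hdD
  have hdU : d ∈ U := (hUD.ge rfl).1
  have hsub : U ∩ interior (closure D) ⊆ closure {d} :=
    calc U ∩ interior (closure D) ⊆ U ∩ closure D := inter_subset_inter_right U interior_subset
      _ ⊆ closure (U ∩ D) := hU.inter_closure
      _ = closure {d} := by rw [hUD]
  exact hiso d hdD <|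
    isOpen_singleton_of_subset_closure (hU.inter isOpen_interior) ⟨hdU, hd⟩ hsub

end Discrete

section NbhdAssignment

variable {X : Type u} {f g : X → Set X}

theorem Dset_subset_Dset {Y N : Set X} (hgf : ∀ x, g x ⊆ f x) : Dset Y g N ⊆ Dset Y f N :=
  fun x hx => ⟨hx.1, hx.2.1, hx.2.2.trans (hgf x)⟩

variable [TopologicalSpace X]

theorem t0Space_of_isDiscrete_Dset (hf : IsNbhdAssignment univ f)
    (hd : ∀ G, IsOpen G → IsDiscrete (Dset univ f G)) : T0Space X := by
  refine ⟨fun x y hxy => ?_⟩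
  have hfx := hf x trivial
  have hfy := hf y trivial
  have hyx : y ∈ f x := (hxy.mem_open_iff hfx.1).1 hfx.2
  have hxy' : x ∈ f y := (hxy.mem_open_iff hfy.1).2 hfy.2
  exact (hd (f x ∩ f y) (hfx.1.inter hfy.1)).eq_of_specializes hxy.specializes
    ⟨trivial, ⟨hfx.2, hxy'⟩, inter_subset_left⟩ ⟨trivial, ⟨hyx, hfy.2⟩, inter_subset_right⟩

theorem hasIrreducibleBase_of_Dset_subset_singleton (hg : IsNbhdAssignment univ g)
    (h : ∀ (y : X) (V : Set X), IsOpen V → y ∈ V →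
      ∃ U, IsOpen U ∧ y ∈ U ∧ U ⊆ V ∧ Dset univ g U ⊆ {y}) : HasIrreducibleBase X := by
  let 𝒰 : X → Set (Set X) := fun y => {U | IsOpen U ∧ y ∈ U ∧ Dset univ g U ⊆ {y}}
  have hbase : ∀ y, NbhdBasisAt (𝒰 y) y := fun y =>
    ⟨fun U hU => ⟨hU.1, hU.2.1⟩, fun V hV hyV =>
      let ⟨U, hU, hyU, hUV, hUy⟩ := h y V hV hyV
      ⟨U, ⟨hU, hyU, hUy⟩, hUV⟩⟩
  refine ⟨𝒰, isTopologicalBasis_of_isOpen_of_nhds ?_ ?_, hbase, fun x hx => ?_⟩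
  · intro U hU
    obtain ⟨y, hyU⟩ := mem_iUnion.1 hU
    exact hyU.1
  · intro y V hyV hV
    obtain ⟨U, hU, hUV⟩ := (hbase y).2 V hV hyV
    exact ⟨U, mem_iUnion_of_mem y hU, hU.2.1, hUV⟩
  · obtain ⟨hgo, hgx⟩ := hg x trivial
    obtain ⟨U, hU, hxU, hUg⟩ := hx (g x) hgo hgx
    obtain ⟨y, hyx, hUy⟩ := mem_iUnion₂.1 hU
    exact hyx (hUy.2.2 ⟨trivial, hxU, hUg⟩).symm

theorem exists_isOpen_Dset_subset_singleton [T0Space X] [SemiregularSpace X]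
    (hg : ∀ x, IsRegularOpen (g x)) (hiso : ∀ x, IsOpen {x} → g x = {x})
    (hd : ∀ G, IsOpen G → IsDiscrete (Dset univ g G)) {y : X} (hgy : y ∈ g y) {V : Set X}
    (hV : IsOpen V) (hyV : y ∈ V) :
    ∃ U, IsOpen U ∧ y ∈ U ∧ U ⊆ V ∧ Dset univ g U ⊆ {y} := by
  set W := V ∩ g y
  have hW : IsOpen W := hV.inter (hg y).isOpen
  have hyW : y ∈ W := ⟨hyV, hgy⟩
  set E := Dset univ g W \ {y}
  have hyE : y ∉ closure E :=
    notMem_closure_diff_singleton_of_isDiscrete (hd W hW) ⟨trivial, hyW, inter_subset_right⟩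
  have hE_not_isolated : ∀ x ∈ E, ¬ IsOpen {x} := by
    rintro x ⟨⟨-, -, hWx⟩, hxy⟩ hx
    have hyx : y ∈ ({x} : Set X) := hiso x hx ▸ hWx hyW
    exact hxy hyx.symm
  have hE : IsNowhereDense E :=
    isNowhereDense_of_isDiscrete ((hd W hW).mono sdiff_subset) hE_not_isolated
  refine ⟨W \ closure E, hW.sdiff isClosed_closure, ⟨hyW, hyE⟩,
    sdiff_subset.trans inter_subset_left, ?_⟩
  rintro x ⟨-, ⟨hxW, hxE⟩, hx⟩
  have hWx : W ⊆ g x := (hg x).subset_of_diff_closure_subset hW hE hx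
  by_contra hxy
  exact hxE (subset_closure ⟨⟨trivial, hxW, hWx⟩, hxy⟩)

end NbhdAssignment

theorem statement6_general {X : Type u} [TopologicalSpace X] [SemiregularSpace X]
    (f : X → Set X) (hf : IsNbhdAssignment univ f)
    (hd : ∀ G, IsOpen G → IsDiscrete (Dset univ f G)) : HasIrreducibleBase X := by
  have : T0Space X := t0Space_of_isDiscrete_Dset hf hd
  choose g hreg hmem hsub hiso using fun x =>
    exists_isRegularOpen_mem_subset_eq_singleton (hf x trivial).1 (hf x trivial).2
  have hdg : ∀ G, IsOpen G → IsDiscrete (Dset univ g G) := fun G hG =>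
    (hd G hG).mono (Dset_subset_Dset hsub)
  exact hasIrreducibleBase_of_Dset_subset_singleton (fun x _ => ⟨(hreg x).isOpen, hmem x⟩)
    fun y _ hV hyV => exists_isOpen_Dset_subset_singleton hreg hiso hdg (hmem y) hV hyV

/-- for a regular (T3) space, a neighbourhood assignment making every
`D_G^f` discrete yields an irreducible base. -/
theorem statement6 {X : Type u} [TopologicalSpace X] [T3Space X]
    (f : X → Set X) (hf : ∀ x, IsOpen (f x) ∧ x ∈ f x)
    (hd : ∀ G : Set X, IsOpen G → ∀ x ∈ Dset Set.univ f G,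
      ∃ U : Set X, IsOpen U ∧ x ∈ U ∧ U ∩ Dset Set.univ f G ⊆ {x}) :
    HasIrreducibleBase X :=
  statement6_general f (fun x _ => hf x) fun G hG =>
    isDiscrete_of_forall_exists_inter_subset (hd G hG)
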